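/- Let N ≥ 3, let E ⊆ S^{N-1} be (N−2)-rectifiable, and let C = { t w : t ≥ 0, w ∈ E } be the cone generated by E. Then: (i) C is (N−1)-rectifiable; and (ii) if in addition H^{N-2}(E) < ∞, then for H^{N-1}-almost every x ∈ C, any (N−1)-dimensional linear subspace P ⊆ ℝ^N that is an approximate tangent plane of C at x contains x (equivalently, ⟨x, ν⟩ = 0 for any unit normal ν to P). -/

import Mathlib

open MeasureTheory Metric Set Filter
open scoped ENNReal NNReal Topology

noncomputable section

/-- `ℝ^N` as a Euclidean space. -/
abbrev Rn (N : ℕ) := EuclideanSpace ℝ (Fin N)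

/-- `u` is locally Lipschitz on the set `s` (neighborhoods taken within `s`). -/
def LocLipOn (N : ℕ) (u : Rn N → ℝ) (s : Set (Rn N)) : Prop :=
  ∀ x ∈ s, ∃ t ∈ nhdsWithin x s, ∃ C : ℝ≥0, LipschitzOnWith C u t

/-- `E` is `k`-rectifiable: up to an `H^k`-null set, `E` is covered by countably many
Lipschitz images of `ℝ^k`. -/
def KRectifiable (N k : ℕ) (E : Set (Rn N)) : Prop :=
  ∃ f : ℕ → (EuclideanSpace ℝ (Fin k) → Rn N),
    (∀ i, ∃ C : ℝ≥0, LipschitzWith C (f i)) ∧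
    μH[(k : ℝ)] (E \ ⋃ i, Set.range (f i)) = 0

/-- The linear subspace `P` is an approximate tangent plane (for `H^k`, `k = d`) of `S`
at `x`: the rescaled sets `(S - x)/r` converge to `P` weakly-* in the sense of measures
against continuous compactly supported test functions. -/
def ApproxTangentAt (N : ℕ) (d : ℝ) (S : Set (Rn N)) (x : Rn N)
    (P : Submodule ℝ (Rn N)) : Prop :=
  ∀ φ : Rn N → ℝ, Continuous φ → HasCompactSupport φ →
    Tendsto (fun r : ℝ => ∫ y in (fun y => r⁻¹ • (y - x)) '' S, φ y ∂μH[d])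
      (𝓝[>] 0) (𝓝 (∫ y in (P : Set (Rn N)), φ y ∂μH[d]))


lemma cone_int {N : ℕ} {d : ℝ} (hd : 0 ≤ d) (S : Set (Rn N)) (x : Rn N) {r : ℝ} (hr : 0 < r)
    (hS : (fun y : Rn N => (1 + r) • y + x) ⁻¹' S = S) (φ : Rn N → ℝ) :
    ∫ y in S, φ ((1 + r) • y + x) ∂μH[d] = ((1 + r)⁻¹) ^ d * ∫ y in S, φ y ∂μH[d] := by
  have hc : (1 + r) ≠ 0 := by positivity
  let e : Rn N ≃ᵐ Rn N :=
    ((Homeomorph.smulOfNeZero (1 + r) hc).trans (Homeomorph.addRight x)).toMeasurableEquiv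
  have he : ∀ y, e y = (1 + r) • y + x := fun y => rfl
  have heh : (e : Rn N → Rn N) = AffineMap.homothety (-(r⁻¹ • x)) (1 + r) := by
    ext1 y
    rw [he, AffineMap.homothety_apply]
    simp only [vsub_eq_sub, vadd_eq_add]
    match_scalars
    · ring
    · field_simp
      ring
  have h1 := e.restrict_map μH[d] S
  rw [show e ⁻¹' S = S from hS] at h1
  rw [heh, map_homothety_hausdorffMeasure hd _ hc, ← heh, Measure.restrict_smul] at h1
  have h2 := integral_map_equiv (μ := (μH[d] : Measure (Rn N)).restrict S) e φ
  rw [← h1, integral_smul_nnreal_measure] at h2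
  simp only [he] at h2
  rw [← h2, NNReal.smul_def, smul_eq_mul]
  congr 1
  simp [abs_of_pos (show 0 < 1 + r by positivity)]

lemma plane_pos {N : ℕ} {d : ℝ} (P : Submodule ℝ (Rn N)) (hP : (Module.finrank ℝ P : ℝ) = d)
    (φ : Rn N → ℝ) (hφ : Continuous φ) (hφc : HasCompactSupport φ) (h0 : 0 ≤ φ) (h1 : φ 0 ≠ 0) :
    0 < ∫ y in (P : Set (Rn N)), φ y ∂μH[d] := by
  subst hP
  have hiso : Isometry ((↑) : P → Rn N) := isometry_subtype_coe
  have hm := hiso.map_hausdorffMeasure (d := (Module.finrank ℝ P : ℝ)) (Or.inl (by positivity))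
  have hcl : IsClosed (P : Set (Rn N)) := P.closed_of_finiteDimensional
  have hr : range ((↑) : P → Rn N) = (P : Set (Rn N)) := by simp
  rw [hr] at hm
  have hemb : Topology.IsClosedEmbedding ((↑) : P → Rn N) := hcl.isClosedEmbedding_subtypeVal
  rw [← hm, hemb.measurableEmbedding.integral_map]
  exact Continuous.integral_pos_of_hasCompactSupport_nonneg_nonzero (x := (0 : P))
    (hφ.comp hiso.continuous) (hφc.comp_isClosedEmbedding hemb) (fun _ => h0 _) (by simpa using h1)

/-- tent function -/
def tent (N : ℕ) (a : Rn N) (ρ : ℝ) (y : Rn N) : ℝ := max 0 (ρ - ‖y + a‖)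

lemma tent_cont (N : ℕ) (a : Rn N) (ρ : ℝ) : Continuous (tent N a ρ) := by
  unfold tent; fun_prop

lemma tent_nonneg (N : ℕ) (a : Rn N) (ρ : ℝ) : 0 ≤ tent N a ρ := fun _ => le_max_left _ _

lemma tent_comp (N : ℕ) (a : Rn N) (ρ : ℝ) : HasCompactSupport (tent N a ρ) := by
  refine HasCompactSupport.of_support_subset_isCompact (isCompact_closedBall (-a) ρ) ?_
  intro y hy
  simp only [Function.mem_support, tent] at hy
  rw [mem_closedBall, dist_eq_norm, sub_neg_eq_add]
  by_contra h
  exact hy (max_eq_left (by linarith))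

lemma tent_pt {N : ℕ} (x y : Rn N) {δ r : ℝ} (hr : 0 < r) (h2 : r * ‖x‖ < δ / 2) :
    tent N 0 (δ / 2) ((1 + r) • y + x) ≤ tent N x δ y := by
  unfold tent
  rw [add_zero]
  refine max_le_max le_rfl ?_
  -- ‖y + x‖ ≤ ‖(1+r) y + x‖ + δ / 2
  have e1 : (1 + r) • (y + x) = ((1 + r) • y + x) + r • x := by module
  have e2 : (1 + r) * ‖y + x‖ ≤ ‖(1 + r) • y + x‖ + r * ‖x‖ := by
    have h3 := norm_add_le ((1 + r) • y + x) (r • x)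
    rw [← e1, norm_smul, norm_smul, Real.norm_of_nonneg hr.le,
      Real.norm_of_nonneg (by positivity)] at h3
    exact h3
  nlinarith [mul_nonneg hr.le (norm_nonneg (y + x))]

lemma cone_inv {N : ℕ} (C : Set (Rn N))
    (hC : ∀ c : ℝ, 0 < c → ∀ z, c • z ∈ C ↔ z ∈ C) (x : Rn N) {r : ℝ} (hr : 0 < r) (S : Set (Rn N))
    (hS : S = (fun y => r⁻¹ • (y - x)) '' C) :
    (fun y : Rn N => (1 + r) • y + x) ⁻¹' S = S := by
  have hmem : ∀ y, y ∈ S ↔ r • y + x ∈ C := by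
    intro y
    rw [hS]
    constructor
    · rintro ⟨z, hz, rfl⟩
      simpa [smul_smul, hr.ne'] using hz
    · intro h
      exact ⟨_, h, by simp [smul_smul, hr.ne']⟩
  ext y
  rw [mem_preimage, hmem, hmem, ← hC (1 + r) (by positivity) (r • y + x)]
  have : r • ((1 + r) • y + x) + x = (1 + r) • (r • y + x) := by module
  rw [this]

lemma tent_le {N : ℕ} (x y : Rn N) {δ R : ℝ} (hδ : 0 < δ) (hR : R = ‖x‖ + δ + 1) :
    tent N x δ y ≤ δ * tent N 0 R y := by
  unfold tent
  have hn : ‖y‖ ≤ ‖y + x‖ + ‖x‖ := by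
    simpa using norm_sub_le (y + x) x
  rw [add_zero]
  rcases le_total (δ - ‖y + x‖) 0 with h | h
  · rw [max_eq_left h]; exact mul_nonneg hδ.le (le_max_left _ _)
  · rw [max_eq_right h]
    have : 1 ≤ max 0 (R - ‖y‖) := le_trans (by rw [hR]; linarith) (le_max_right _ _)
    nlinarith [norm_nonneg (y + x)]

lemma cone_ineq {N : ℕ} {d : ℝ} (hd : 0 ≤ d) (C : Set (Rn N))
    (hC : ∀ c : ℝ, 0 < c → ∀ z, c • z ∈ C ↔ z ∈ C) (x : Rn N) {δ R r : ℝ} (hδ : 0 < δ)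
    (hR : R = ‖x‖ + δ + 1) (hr : 0 < r) (h2 : r * ‖x‖ < δ / 2) (S : Set (Rn N))
    (hS : S = (fun y => r⁻¹ • (y - x)) '' C)
    (h1 : ∫ y in S, tent N 0 R y ∂μH[d] ≠ 0) :
    ((1 + r)⁻¹) ^ d * ∫ y in S, tent N 0 (δ / 2) y ∂μH[d] ≤ ∫ y in S, tent N x δ y ∂μH[d] := by
  have hinv := cone_inv C hC x hr S hS
  have iχ : Integrable (tent N 0 R) ((μH[d] : Measure (Rn N)).restrict S) := by
    by_contra h
    exact h1 (integral_undef h)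
  have iΦ : Integrable (tent N x δ) ((μH[d] : Measure (Rn N)).restrict S) := by
    refine (iχ.const_mul δ).mono' (tent_cont _ _ _).aestronglyMeasurable
      (Eventually.of_forall fun y => ?_)
    rw [Real.norm_of_nonneg (tent_nonneg _ _ _ y)]
    exact tent_le x y hδ hR
  refine (cone_int hd S x hr hinv (tent N 0 (δ / 2))).symm.trans_le ?_
  have hnn : ∀ y : Rn N, 0 ≤ tent N 0 (δ / 2) ((1 + r) • y + x) := fun y => tent_nonneg _ _ _ _
  have hpt : ∀ y : Rn N, tent N 0 (δ / 2) ((1 + r) • y + x) ≤ tent N x δ y :=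
    fun y => tent_pt x y hr h2
  clear hS h1 iχ
  exact integral_mono_of_nonneg (ae_of_all _ hnn) iΦ (ae_of_all _ hpt)

lemma tangent_mem {N : ℕ} {d : ℝ} (hd : 0 ≤ d) (C : Set (Rn N))
    (hC : ∀ c : ℝ, 0 < c → ∀ z, c • z ∈ C ↔ z ∈ C) (x : Rn N) (P : Submodule ℝ (Rn N))
    (hP : (Module.finrank ℝ P : ℝ) = d) (hT : ApproxTangentAt N d C x P) : x ∈ P := by
  by_contra hx
  have hcl : IsClosed (P : Set (Rn N)) := P.closed_of_finiteDimensional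
  obtain ⟨δ, hδ, hδP⟩ : ∃ δ > 0, ∀ y ∈ P, δ ≤ ‖y + x‖ := by
    have : (P : Set (Rn N))ᶜ ∈ 𝓝 x := hcl.isOpen_compl.mem_nhds hx
    obtain ⟨δ, hδ, h⟩ := Metric.mem_nhds_iff.1 this
    refine ⟨δ, hδ, fun y hy => ?_⟩
    by_contra hlt
    have : -y ∈ ball x δ := by
      rw [mem_ball, dist_comm, dist_eq_norm, sub_neg_eq_add, add_comm]; linarith
    exact h this (P.neg_mem hy)
  set R := ‖x‖ + δ + 1 with hR
  have hRp : 0 < R := by positivity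
  have hφ := hT (tent N 0 (δ / 2)) (tent_cont _ _ _) (tent_comp _ _ _)
  have hΦ := hT (tent N x δ) (tent_cont _ _ _) (tent_comp _ _ _)
  have hχ := hT (tent N 0 R) (tent_cont _ _ _) (tent_comp _ _ _)
  have pφ := plane_pos P hP (tent N 0 (δ / 2)) (tent_cont _ _ _) (tent_comp _ _ _)
    (tent_nonneg _ _ _) (by simp [tent, hδ])
  have pχ := plane_pos P hP (tent N 0 R) (tent_cont _ _ _) (tent_comp _ _ _)
    (tent_nonneg _ _ _) (by simp [tent, hRp])
  have zΦ : ∫ y in (P : Set (Rn N)), tent N x δ y ∂μH[d] = 0 := by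
    rw [setIntegral_eq_zero_of_forall_eq_zero]
    intro y hy
    exact max_eq_left (by linarith [hδP y hy])
  rw [zΦ] at hΦ
  have hint := hχ.eventually_ne pχ.ne'
  have hc : Tendsto (fun r : ℝ => ((1 + r)⁻¹) ^ d) (𝓝[>] 0) (𝓝 1) := by
    have : ContinuousAt (fun r : ℝ => ((1 + r)⁻¹) ^ d) 0 := by
      refine ContinuousAt.rpow_const ?_ (Or.inl (by norm_num))
      exact ContinuousAt.inv₀ (by fun_prop) (by norm_num)
    have h := this.tendsto
    simp only [add_zero, inv_one, Real.one_rpow] at h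
    exact h.mono_left nhdsWithin_le_nhds
  have hlim := hc.mul hφ
  rw [one_mul] at hlim
  have hsmall : ∀ᶠ r : ℝ in 𝓝[>] 0, r * ‖x‖ < δ / 2 := by
    have : Tendsto (fun r : ℝ => r * ‖x‖) (𝓝[>] 0) (𝓝 (0 * ‖x‖)) :=
      (Continuous.tendsto (by fun_prop) 0).mono_left nhdsWithin_le_nhds
    exact this.eventually_lt_const (by simp [hδ])
  have hle := le_of_tendsto_of_tendsto hlim hΦ (by
    filter_upwards [hint, hsmall, self_mem_nhdsWithin] with r h1 h2 hr
    exact cone_ineq hd C hC x hδ hR hr h2 _ rfl h1)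
  linarith

lemma cover_of_null {N k : ℕ} (hk : 1 ≤ k) (A : Set (Rn N)) (hA : μH[(k : ℝ)] A = 0)
    {ε : ℝ} (hε : 0 < ε) : ∃ (t : ℕ → Set (Rn N)) (d : ℕ → ℝ), A ⊆ ⋃ i, t i ∧
      (∀ i, 0 < d i) ∧ (∀ i, d i ≤ ε) ∧ (∀ i, ediam (t i) ≤ ENNReal.ofReal (d i)) ∧
      ∑' i, ENNReal.ofReal (d i ^ k) ≤ ENNReal.ofReal ε := by
  rw [Measure.hausdorffMeasure_apply] at hA
  have hε2 : 0 < ENNReal.ofReal (ε / 2) := by simp [hε]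
  have h1 := hA
  simp only [ENNReal.iSup_eq_zero] at h1
  have h2 := h1 _ hε2
  rw [← h2] at hε2
  have h3 : (⨅ (t : ℕ → Set (Rn N)) (_ : A ⊆ ⋃ n, t n) (_ : ∀ n, ediam (t n) ≤ ENNReal.ofReal (ε / 2)),
          ∑' n, ⨆ _ : (t n).Nonempty, ediam (t n) ^ (k : ℝ)) < ENNReal.ofReal (ε / 2) := by
    rw [h2]; simp [hε]
  simp only [iInf_lt_iff] at h3
  obtain ⟨t, hAt, hdt, hsum⟩ := h3
  obtain ⟨η, hη, hηs⟩ := ENNReal.exists_pos_sum_of_countable (ε := ENNReal.ofReal (ε / 2))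
    (by simp [hε]) ℕ
  have hfin : ∀ i, ediam (t i) ≠ ⊤ := fun i => ne_top_of_le_ne_top ENNReal.ofReal_ne_top (hdt i)
  have hd : ∀ i, ∃ d : ℝ, (ediam (t i)).toReal < d ∧ d < (ediam (t i)).toReal + ε / 2 ∧
      d ^ k < (ediam (t i)).toReal ^ k + η i := by
    intro i
    set D := (ediam (t i)).toReal
    have e1 : ∀ᶠ d in 𝓝[>] D, D < d := self_mem_nhdsWithin
    have e2 : ∀ᶠ d in 𝓝[>] D, d < D + ε / 2 :=
      nhdsWithin_le_nhds (eventually_lt_nhds (by linarith))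
    have e3 : ∀ᶠ d in 𝓝[>] D, d ^ k < D ^ k + η i := by
      have : Tendsto (fun d : ℝ => d ^ k) (𝓝[>] D) (𝓝 (D ^ k)) :=
        (Continuous.tendsto (by fun_prop) D).mono_left nhdsWithin_le_nhds
      exact this.eventually_lt_const (by have := hη i; simpa using this)
    exact (e1.and (e2.and e3)).exists
  choose d hd1 hd2 hd3 using hd
  refine ⟨t, d, hAt, fun i => lt_of_le_of_lt ENNReal.toReal_nonneg (hd1 i), fun i => ?_,
    fun i => ?_, ?_⟩
  · have := ENNReal.toReal_mono ENNReal.ofReal_ne_top (hdt i)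
    rw [ENNReal.toReal_ofReal (by positivity)] at this
    linarith [hd2 i]
  · rw [← ENNReal.ofReal_toReal (hfin i)]
    exact ENNReal.ofReal_le_ofReal (hd1 i).le
  · calc ∑' i, ENNReal.ofReal (d i ^ k)
        ≤ ∑' i, ((⨆ _ : (t i).Nonempty, ediam (t i) ^ (k : ℝ)) + η i) := by
          refine ENNReal.tsum_le_tsum fun i => ?_
          refine (ENNReal.ofReal_le_ofReal (hd3 i).le).trans ?_
          rw [ENNReal.ofReal_add (by positivity) (by positivity), ENNReal.ofReal_coe_nnreal]
          gcongr
          rw [ENNReal.ofReal_pow ENNReal.toReal_nonneg, ENNReal.ofReal_toReal (hfin i)]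
          rcases (t i).eq_empty_or_nonempty with h | h
          · simp [h, show k ≠ 0 by omega]
          · simp [h]
      _ ≤ ENNReal.ofReal (ε / 2) + ENNReal.ofReal (ε / 2) := by
          rw [ENNReal.tsum_add]; gcongr
      _ = ENNReal.ofReal ε := by
          rw [← ENNReal.ofReal_add (by positivity) (by positivity)]; congr 1; ring

lemma cone_null {N k : ℕ} (hk : 1 ≤ k) (A : Set (Rn N)) (hAS : A ⊆ sphere (0 : Rn N) 1)
    (hA : μH[(k : ℝ)] A = 0) (M : ℕ) :
    μH[((k + 1 : ℕ) : ℝ)] {z : Rn N | ∃ s : ℝ, 0 ≤ s ∧ s ≤ M ∧ ∃ w ∈ A, z = s • w} = 0 := by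
  have hε : ∀ n : ℕ, 0 < 1 / ((n : ℝ) + 1) := fun n => by positivity
  choose t d hAt hd0 hdε hdiam hsum using fun n => cover_of_null hk A hA (hε n)
  have hd1 : ∀ n i, d n i ≤ 1 := fun n i => (hdε n i).trans (by
    rw [div_le_one (by positivity)]; linarith [Nat.cast_nonneg (α := ℝ) n])
  let ι : ℕ → Type := fun n => Σ i : ℕ, Fin (⌊M / d n i⌋₊ + 1)
  let T : ∀ n, ι n → Set (Rn N) := fun n p =>
    {z | ∃ s : ℝ, (p.2 : ℝ) * d n p.1 ≤ s ∧ s ≤ ((p.2 : ℝ) + 1) * d n p.1 ∧ s ≤ M ∧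
      ∃ w ∈ A ∩ t n p.1, z = s • w}
  have hT : ∀ n p, ediam (T n p) ≤ ENNReal.ofReal ((M + 1) * d n p.1) := by
    rintro n ⟨i, j⟩
    refine ediam_le ?_
    rintro _ ⟨s, h1, h2, h3, w, hw, rfl⟩ _ ⟨s', h1', h2', h3', w', hw', rfl⟩
    dsimp only at *
    rw [edist_dist]
    refine ENNReal.ofReal_le_ofReal ?_
    have hww : dist w w' ≤ d n i := by
      have := (edist_le_ediam_of_mem hw.2 hw'.2).trans (hdiam n i)
      rw [edist_dist] at this
      exact (ENNReal.ofReal_le_ofReal_iff (hd0 n i).le).1 this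
    have hw1 : ‖w‖ = 1 := by simpa using hAS hw.1
    have hs0 : 0 ≤ s' := le_trans (mul_nonneg (by positivity) (hd0 n i).le) h1'
    have e : s • w - s' • w' = (s - s') • w + s' • (w - w') := by module
    rw [dist_eq_norm] at hww ⊢
    rw [e]
    refine (norm_add_le _ _).trans ?_
    rw [norm_smul, norm_smul, hw1, Real.norm_of_nonneg hs0, Real.norm_eq_abs, mul_one]
    have : |s - s'| ≤ d n i := by rw [abs_le]; constructor <;> linarith
    nlinarith [norm_nonneg (w - w')]
  have key := Measure.hausdorffMeasure_le_liminf_tsum (ι := ι) ((k + 1 : ℕ) : ℝ)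
    {z : Rn N | ∃ s : ℝ, 0 ≤ s ∧ s ≤ M ∧ ∃ w ∈ A, z = s • w} (l := atTop)
    (fun n : ℕ => ENNReal.ofReal ((M + 1) * (1 / ((n : ℝ) + 1)))) (by
      have h : Tendsto (fun n : ℕ => (M + 1 : ℝ) * (1 / ((n : ℝ) + 1))) atTop (𝓝 ((M + 1) * 0)) :=
        tendsto_one_div_add_atTop_nhds_zero_nat.const_mul _
      rw [mul_zero] at h
      simpa using ENNReal.tendsto_ofReal h) T
    (Eventually.of_forall fun n p => (hT n p).trans (ENNReal.ofReal_le_ofReal (by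
      have := hdε n p.1; gcongr)))
    (Eventually.of_forall fun n => by
      rintro z ⟨s, hs0, hsM, w, hw, rfl⟩
      obtain ⟨i, hi⟩ := mem_iUnion.1 (hAt n hw)
      have hdi := hd0 n i
      refine mem_iUnion.2 ⟨⟨i, ⟨⌊s / d n i⌋₊, ?_⟩⟩, s, ?_, ?_, hsM, w, ⟨hw, hi⟩, rfl⟩
      · exact Nat.lt_succ_of_le (Nat.floor_le_floor (by gcongr))
      · dsimp only
        rw [← le_div_iff₀ hdi]
        exact Nat.floor_le (by positivity)
      · dsimp only
        rw [← div_le_iff₀ hdi]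
        exact (Nat.lt_floor_add_one _).le)
  refine le_antisymm (key.trans ?_) bot_le
  have hb : ∀ n, ∑' p : ι n, ediam (T n p) ^ (((k + 1 : ℕ) : ℝ)) ≤
      ENNReal.ofReal ((M + 1) ^ (k + 2)) * ENNReal.ofReal (1 / ((n : ℝ) + 1)) := by
    intro n
    rw [ENNReal.tsum_sigma']
    refine le_trans ?_ (mul_le_mul_right (hsum n) _)
    rw [← ENNReal.tsum_mul_left]
    refine ENNReal.tsum_le_tsum fun i => ?_
    have hdi := hd0 n i
    calc ∑' j : Fin (⌊M / d n i⌋₊ + 1), ediam (T n ⟨i, j⟩) ^ (((k + 1 : ℕ) : ℝ))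
        ≤ ∑' j : Fin (⌊M / d n i⌋₊ + 1), ENNReal.ofReal (((M + 1) * d n i) ^ (k + 1)) := by
          refine ENNReal.tsum_le_tsum fun j => ?_
          rw [ENNReal.rpow_natCast, ENNReal.ofReal_pow (by positivity)]
          gcongr
          exact hT n ⟨i, j⟩
      _ = ENNReal.ofReal ((⌊M / d n i⌋₊ + 1) * ((M + 1) * d n i) ^ (k + 1)) := by
          rw [tsum_fintype, Finset.sum_const, Finset.card_univ, Fintype.card_fin,
            ← ENNReal.ofReal_nsmul]
          simp
      _ ≤ _ := by
          rw [← ENNReal.ofReal_mul (by positivity)]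
          refine ENNReal.ofReal_le_ofReal ?_
          have hf : (⌊M / d n i⌋₊ : ℝ) ≤ M / d n i := Nat.floor_le (by positivity)
          calc ((⌊M / d n i⌋₊ : ℝ) + 1) * ((M + 1) * d n i) ^ (k + 1)
              ≤ (M / d n i + 1) * ((M + 1) * d n i) ^ (k + 1) := by gcongr
            _ = (M + d n i) * (M + 1) ^ (k + 1) * d n i ^ k := by
                rw [mul_pow, pow_succ (d n i)]; field_simp
            _ ≤ (M + 1) * (M + 1) ^ (k + 1) * d n i ^ k := by
                have := hd1 n i; gcongr
            _ = _ := by ring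
  have hlim : Tendsto (fun n : ℕ => ENNReal.ofReal (((M : ℝ) + 1) ^ (k + 2)) *
      ENNReal.ofReal (1 / ((n : ℝ) + 1))) atTop (𝓝 0) := by
    have h := ENNReal.Tendsto.const_mul (a := ENNReal.ofReal (((M : ℝ) + 1) ^ (k + 2)))
      (ENNReal.tendsto_ofReal (tendsto_one_div_add_atTop_nhds_zero_nat (𝕜 := ℝ)))
      (Or.inr ENNReal.ofReal_ne_top)
    simpa using h
  rw [← hlim.liminf_eq]
  exact liminf_le_liminf (Eventually.of_forall hb)

lemma cone_lip {N k : ℕ} (f : EuclideanSpace ℝ (Fin k) → Rn N) {K : ℝ≥0} (hf : LipschitzWith K f)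
    (n : ℕ) : ∃ g : EuclideanSpace ℝ (Fin (k + 1)) → Rn N, (∃ K', LipschitzWith K' g) ∧
      ∀ (s : ℝ) (p : EuclideanSpace ℝ (Fin k)), 0 ≤ s → s ≤ n → ‖p‖ ≤ n →
        s • f p ∈ range g := by
  let e : EuclideanSpace ℝ (Fin (k + 1)) ≃L[ℝ] ℝ × EuclideanSpace ℝ (Fin k) :=
    ContinuousLinearEquiv.ofFinrankEq (by simp [add_comm])
  let D : Set (ℝ × EuclideanSpace ℝ (Fin k)) := {q | 0 ≤ q.1 ∧ q.1 ≤ n ∧ ‖q.2‖ ≤ n}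
  let h : ℝ × EuclideanSpace ℝ (Fin k) → Rn N := fun q => q.1 • f q.2
  let K₁ : ℝ≥0 := n * K + (‖f 0‖₊ + K * n)
  have hh : LipschitzOnWith K₁ h D := by
    refine LipschitzOnWith.of_dist_le_mul ?_
    rintro ⟨s, p⟩ ⟨h1, h2, h3⟩ ⟨s', p'⟩ ⟨h1', h2', h3'⟩
    dsimp only at *
    have hs : |s - s'| ≤ dist (s, p) (s', p') := by
      rw [← Real.dist_eq, Prod.dist_eq]; exact le_max_left _ _
    have hp : dist p p' ≤ dist (s, p) (s', p') := by
      rw [Prod.dist_eq]; exact le_max_right _ _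
    set δ := dist (s, p) (s', p')
    have hδ : 0 ≤ δ := dist_nonneg
    have e1 : s • f p - s' • f p' = s • (f p - f p') + (s - s') • f p' := by module
    have e2 : ‖f p - f p'‖ ≤ K * δ := by
      rw [← dist_eq_norm]
      exact (hf.dist_le_mul p p').trans (by gcongr)
    have e3 : ‖f p'‖ ≤ ‖f 0‖ + K * n := by
      have a1 := hf.dist_le_mul p' 0
      rw [dist_eq_norm, dist_zero_right] at a1
      have a2 := norm_le_norm_add_norm_sub' (f p') (f 0)
      have : (K : ℝ) * ‖p'‖ ≤ K * n := by gcongr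
      linarith
    rw [dist_eq_norm]
    change ‖s • f p - s' • f p'‖ ≤ _
    rw [e1]
    refine (norm_add_le _ _).trans ?_
    rw [norm_smul, norm_smul, Real.norm_of_nonneg h1, Real.norm_eq_abs]
    calc s * ‖f p - f p'‖ + |s - s'| * ‖f p'‖
        ≤ n * (K * δ) + δ * (‖f 0‖ + K * n) := by gcongr
      _ = (K₁ : ℝ) * δ := by simp [K₁]; ring
  obtain ⟨g, hg, hgD⟩ := hh.extend_finite_dimension
  refine ⟨g ∘ e, ⟨_, hg.comp e.lipschitz⟩, fun s p h1 h2 h3 => ⟨e.symm (s, p), ?_⟩⟩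
  simp only [Function.comp, ContinuousLinearEquiv.apply_symm_apply]
  exact (hgD (show (s, p) ∈ D from ⟨h1, h2, h3⟩)).symm

lemma cone_rect {N k : ℕ} (hk : 1 ≤ k) (E : Set (Rn N)) (hE : E ⊆ sphere (0 : Rn N) 1)
    (hrect : KRectifiable N k E) :
    KRectifiable N (k + 1) {z | ∃ t : ℝ, 0 ≤ t ∧ ∃ w ∈ E, z = t • w} := by
  obtain ⟨f, hf, h0⟩ := hrect
  choose K hK using hf
  choose g hg hgr using fun i n => cone_lip (f i) (hK i) n
  refine ⟨fun m => g m.unpair.1 m.unpair.2, fun m => hg _ _, ?_⟩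
  refine measure_mono_null ?_ (measure_iUnion_null
    (fun M => cone_null hk _ (sdiff_subset.trans hE) h0 M))
  rintro z ⟨⟨s, hs, w, hw, rfl⟩, hz⟩
  obtain ⟨M, hM⟩ := exists_nat_ge s
  refine mem_iUnion.2 ⟨M, s, hs, hM, w, ⟨hw, fun hwr => hz ?_⟩, rfl⟩
  obtain ⟨i, p, rfl⟩ := mem_iUnion.1 hwr
  obtain ⟨n, hn⟩ := exists_nat_ge (max s ‖p‖)
  refine mem_iUnion.2 ⟨Nat.pair i n, ?_⟩
  simp only [Nat.unpair_pair]
  exact hgr i n s p hs ((le_max_left _ _).trans hn) ((le_max_right _ _).trans hn)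

/-- Let `N ≥ 3`, `E ⊆ S^{N-1}` be `(N-2)`-rectifiable and
`C = {t w : t ≥ 0, w ∈ E}` the cone over `E`. Then (i) `C` is `(N-1)`-rectifiable, and
(ii) if moreover `H^{N-2}(E) < ∞`, then for `H^{N-1}`-a.e. `x ∈ C`, every
`(N-1)`-dimensional approximate tangent plane of `C` at `x` contains `x`. -/
theorem statement4 {N : ℕ} (hN : 3 ≤ N) (E : Set (Rn N))
    (hE : E ⊆ sphere (0 : Rn N) 1) (hrect : KRectifiable N (N - 2) E)
    (C : Set (Rn N)) (hC : C = {z | ∃ t : ℝ, 0 ≤ t ∧ ∃ w ∈ E, z = t • w}) :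
    KRectifiable N (N - 1) C ∧
    (μH[(N : ℝ) - 2] E < ⊤ →
      ∀ᵐ x ∂(μH[(N : ℝ) - 1]).restrict C,
        ∀ P : Submodule ℝ (Rn N), Module.finrank ℝ P = N - 1 →
          ApproxTangentAt N ((N : ℝ) - 1) C x P → x ∈ P) := by

  obtain ⟨k, rfl⟩ : ∃ k, N = k + 2 := ⟨N - 2, by omega⟩
  refine ⟨?_, fun _ => Eventually.of_forall fun x P hP hT => ?_⟩
  · rw [hC]
    exact cone_rect (k := k) (by omega) E hE hrect
  · refine tangent_mem (d := ((k + 2 : ℕ) : ℝ) - 1) ?_ C ?_ x P ?_ hT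
    · push_cast; linarith [Nat.cast_nonneg (α := ℝ) k]
    · intro c hc z
      rw [hC]
      constructor
      · rintro ⟨t, ht, w, hw, h⟩
        refine ⟨c⁻¹ * t, by positivity, w, hw, ?_⟩
        rw [mul_smul, ← h, smul_smul, inv_mul_cancel₀ hc.ne', one_smul]
      · rintro ⟨t, ht, w, hw, rfl⟩
        exact ⟨c * t, by positivity, w, hw, by rw [mul_smul]⟩
    · rw [hP]; push_cast; ring
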